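/- arXiv:1304.5061 — 2 statements merged into one kernel-verified Lean document; each statement's English description precedes it below -/
import Mathlib

section
/- Let G be a finitely generated group and p a prime. Then def_p(G) − 1 ≤ RG_p(G). In particular, if def_p(G) > 1, then RG_p(G) > 0. -/
/-!
Fix a presentation `⟨X | R⟩` of `G` with `|X| = n` and a subgroup `H` of finite index `i`. It is
enough to show `i (n - ∑ p ^ (-ν_p r)) ≤ d_p(H) + i - 1`, where `d_p(H) = dim Hom(H, 𝔽_p)`
(`finrank_homs_le_pRank`).

Both sides are compared with the space of derivations (1-cocycles) of `G` in the coinduced module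
`M` of functions `G ⧸ H → 𝔽_p`, realized as the space of derivations of the free group on `X`
that vanish on `R`.

* Upper bound (`finrank_derVanishing_le`): as in Shapiro's lemma, evaluation at the trivial coset
  turns a derivation into a homomorphism `H → 𝔽_p`, and a derivation with zero restriction is
  determined by a function on the nontrivial cosets. So the dimension is at most `d_p(H) + i - 1`.
* Lower bound (`le_finrank_derVanishing`): derivations of the free group have dimension `n i`. For
  a relator `r = s ^ q` with `q = p ^ ν_p(r)`, `D r = (1 + T + ⋯ + T ^ (q - 1)) (D s)`, where `T`
  is the action of `s` on `M`, so `r` imposes at most as many linear conditions as the rank of this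
  norm operator. In characteristic `p` the norm operator is `(T - 1) ^ (q - 1)`, and
  `(T - 1) ^ q = T ^ q - 1 = 0` because `r` acts trivially; hence its rank is at most `i / q`
  (`mul_finrank_range_norm_le`). In particular it vanishes once `q > i`, so by summability only
  finitely many relators matter, and the dimension is at least `n i - ∑ i / q`.

Working with derivations in place of the preimage of `H` in the free group makes the Schreier index
formula unnecessary.
-/

open scoped Classical ENNReal

namespace ResDef

variable {G : Type*} [Group G]

/-- The order of the image of `x` in `G ⧸ H`: the least positive `j` with `x ^ j ∈ H`,
or `0` if there is no such `j`. -/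
noncomputable def orderIn (H : Subgroup G) (x : G) : ℕ :=
  sInf {j : ℕ | 0 < j ∧ x ^ j ∈ H}

/-- The finite residual: the intersection of all finite index subgroups. -/
def finiteResidual (G : Type*) [Group G] : Subgroup G :=
  ⨅ (H : Subgroup G) (_ : H.index ≠ 0), H

/-- An element of a free group is not a proper power. -/
def NotProperPower {α : Type*} (u : FreeGroup α) : Prop :=
  ∀ (v : FreeGroup α) (k : ℕ), u = v ^ k → k = 1

/-- `G` admits a finite presentation. -/
def FinitelyPresentedGroup (G : Type*) [Group G] : Prop :=
  ∃ (n : ℕ) (R : Finset (FreeGroup (Fin n))) (φ : FreeGroup (Fin n) →* G),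
    Function.Surjective φ ∧ φ.ker = Subgroup.normalClosure (R : Set (FreeGroup (Fin n)))

/-- The deficiency of a finitely presented group. -/
noncomputable def deficiency (G : Type*) [Group G] : ℝ :=
  sSup {x : ℝ | ∃ (n : ℕ) (R : Finset (FreeGroup (Fin n))) (φ : FreeGroup (Fin n) →* G),
    Function.Surjective φ ∧ φ.ker = Subgroup.normalClosure (R : Set (FreeGroup (Fin n))) ∧
    x = (n : ℝ) - (R.card : ℝ)}

/-- The residual deficiency of a finitely presented group. -/
noncomputable def rdef (G : Type*) [Group G] : ℝ :=
  sSup {x : ℝ | ∃ (n s : ℕ) (u : Fin s → FreeGroup (Fin n)) (m : Fin s → ℕ)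
    (φ : FreeGroup (Fin n) →* G),
    (∀ i, 1 ≤ m i) ∧ (∀ i, NotProperPower (u i)) ∧ Function.Surjective φ ∧
    φ.ker = Subgroup.normalClosure (Set.range fun i => u i ^ m i) ∧
    x = (n : ℝ) - ∑ i, ((orderIn (finiteResidual G) (φ (u i)) : ℝ))⁻¹}

/-- The deficiency gradient. -/
noncomputable def DG (G : Type*) [Group G] : ℝ :=
  sSup {x : ℝ | ∃ H : Subgroup G, H.index ≠ 0 ∧
    x = (deficiency H - 1) / (H.index : ℝ)}

/-- `ν_p(r)`: the largest `k` such that `r = s ^ (p ^ k)` for some `s`. -/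
noncomputable def nuP (p : ℕ) {α : Type*} (r : FreeGroup α) : ℕ :=
  sSup {k : ℕ | ∃ s : FreeGroup α, r = s ^ (p ^ k)}

/-- The `p`-deficiency of a group. -/
noncomputable def defP (p : ℕ) (G : Type*) [Group G] : ℝ :=
  sSup {x : ℝ | ∃ (n : ℕ) (R : Set (FreeGroup (Fin n))) (φ : FreeGroup (Fin n) →* G),
    Function.Surjective φ ∧ φ.ker = Subgroup.normalClosure R ∧
    Summable (fun r : R => ((p : ℝ) ^ (nuP p r.1))⁻¹) ∧
    x = (n : ℝ) - ∑' r : R, ((p : ℝ) ^ (nuP p r.1))⁻¹}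

/-- The `p`-deficiency gradient. -/
noncomputable def DGp (p : ℕ) (G : Type*) [Group G] : ℝ :=
  sSup {x : ℝ | ∃ H : Subgroup G, H.Normal ∧ H.index ≠ 0 ∧
    x = (defP p H - 1) / (H.index : ℝ)}

/-- The rank (minimal number of generators) of a group. -/
noncomputable def grpRank (G : Type*) [Group G] : ℕ :=
  sInf {n : ℕ | ∃ S : Finset G, S.card = n ∧ Subgroup.closure (S : Set G) = ⊤}

/-- The rank gradient. -/
noncomputable def RG (G : Type*) [Group G] : ℝ :=
  sInf {x : ℝ | ∃ H : Subgroup G, H.index ≠ 0 ∧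
    x = ((grpRank H : ℝ) - 1) / (H.index : ℝ)}

/-- The `p`-rank: the largest `n` such that `G` surjects onto `(C_p)^n`. -/
noncomputable def pRank (p : ℕ) (G : Type*) [Group G] : ℕ :=
  sSup {n : ℕ | ∃ f : G →* (Fin n → Multiplicative (ZMod p)), Function.Surjective f}

/-- The `p`-rank gradient. -/
noncomputable def RGp (p : ℕ) (G : Type*) [Group G] : ℝ :=
  sInf {x : ℝ | ∃ H : Subgroup G, H.Normal ∧ H.index ≠ 0 ∧
    x = ((pRank p H : ℝ) - 1) / (H.index : ℝ)}

/-- `G` is large: some finite index subgroup surjects onto a free group of rank 2. -/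
def Large (G : Type*) [Group G] : Prop :=
  ∃ H : Subgroup G, H.index ≠ 0 ∧ ∃ f : H →* FreeGroup (Fin 2), Function.Surjective f

/-- The first Betti number: the largest `n` such that `G` surjects onto `ℤ^n`. -/
noncomputable def firstBetti (G : Type*) [Group G] : ℕ :=
  sSup {n : ℕ | ∃ f : G →* Multiplicative (Fin n → ℤ), Function.Surjective f}

/-- The order of the image of `x` in `G ⧸ H`, as an extended natural number. -/
noncomputable def orderInE (H : Subgroup G) (x : G) : ℕ∞ :=
  if orderIn H x = 0 then ⊤ else (orderIn H x : ℕ∞)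

/-- `ν(g; G, K)` from the paper, valued in `ℕ∞`. -/
noncomputable def nu (K : Subgroup G) (g : G) : ℕ∞ :=
  if g ∈ K then
    sSup ((fun a : G => orderInE K a) '' {a : G | ∃ n : ℤ, a ^ n = g})
  else
    sSup ((fun q : G × ℤ => (q.2.natAbs : ℕ∞)) '' {q : G × ℤ | q.2 ≠ 0 ∧ q.1 ^ q.2 = g})

/-- The relative size `ν(g;G,K)⁻¹` of an element (`0` if `ν` is infinite). -/
noncomputable def relsizeElem (K : Subgroup G) (g : G) : ℝ :=
  (((nu K g).toNat : ℝ))⁻¹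

/-- The relative size of a finite set. -/
noncomputable def relsizeFinset (K : Subgroup G) (S : Finset G) : ℝ :=
  ∑ g ∈ S, relsizeElem K g

/-- The relative size of a normal subgroup `M`, finitely generated as a normal subgroup. -/
noncomputable def relsizeSubgroup (K M : Subgroup G) : ℝ :=
  sInf {x : ℝ | ∃ S : Finset G, Subgroup.normalClosure (S : Set G) = M ∧
    x = relsizeFinset K S}

/-- `a` is a minimal root of `g` in `G` with respect to `K`. -/
def IsMinimalRoot (K : Subgroup G) (g a : G) : Prop :=
  (g ∈ K ∧ (∃ n : ℤ, a ^ n = g) ∧ ((orderIn K a : ℕ∞) = nu K g)) ∨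
  (g ∉ K ∧ ∃ m : ℕ, (m : ℕ∞) = nu K g ∧ a ^ m = g)

/-! ### A rank bound for unipotent operators -/

theorem finrank_range_pow_succ_le {k V : Type*} [Field k] [AddCommGroup V] [Module k V]
    [FiniteDimensional k V] (A : Module.End k V) {q : ℕ} (hA : A ^ q = 0) (j : ℕ) (hj : j < q) :
    Module.finrank k (LinearMap.range (A ^ (j + 1))) +
      Module.finrank k (LinearMap.range (A ^ (q - 1))) ≤
      Module.finrank k (LinearMap.range (A ^ j)) := by
  -- `A ^ (q - 1 - j)` maps `range (A ^ j)` onto `range (A ^ (q - 1))` and kills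
  -- `range (A ^ (j + 1))`.
  let B : LinearMap.range (A ^ j) →ₗ[k] V := (A ^ (q - 1 - j)).domRestrict _
  have hrange : LinearMap.range B = LinearMap.range (A ^ (q - 1)) := by
    rw [LinearMap.range_domRestrict, ← LinearMap.range_comp, ← Module.End.mul_eq_comp, ← pow_add]
    congr 2
    omega
  have hle : LinearMap.range (A ^ (j + 1)) ≤ LinearMap.range (A ^ j) := by
    rw [pow_succ, Module.End.mul_eq_comp]
    exact LinearMap.range_comp_le_range _ _
  have hker : LinearMap.range (Submodule.inclusion hle) ≤ LinearMap.ker B := by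
    rintro _ ⟨⟨_, w, rfl⟩, rfl⟩
    change (A ^ (q - 1 - j)) ((A ^ (j + 1)) w) = 0
    rw [← Module.End.mul_apply, ← pow_add, show q - 1 - j + (j + 1) = q by omega, hA]
    rfl
  have h1 := Submodule.finrank_mono hker
  rw [LinearMap.finrank_range_of_inj (Submodule.inclusion_injective hle)] at h1
  have h2 := LinearMap.finrank_range_add_finrank_ker B
  rw [hrange] at h2
  omega

/-- All Jordan blocks of `A` have size at most `q`, and the rank of `A ^ (q - 1)` is the number of
blocks of size exactly `q`. -/
theorem mul_finrank_range_pow_le {k V : Type*} [Field k] [AddCommGroup V] [Module k V]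
    [FiniteDimensional k V] (A : Module.End k V) {q : ℕ} (hA : A ^ q = 0) :
    q * Module.finrank k (LinearMap.range (A ^ (q - 1))) ≤ Module.finrank k V := by
  have key : ∀ j, j ≤ q → j * Module.finrank k (LinearMap.range (A ^ (q - 1))) ≤
      Module.finrank k (LinearMap.range (A ^ (q - j))) := by
    intro j
    induction j with
    | zero => simp
    | succ j ih =>
      intro hj
      have h1 := ih (by omega)
      have h2 := finrank_range_pow_succ_le A hA (q - (j + 1)) (by omega)
      rw [show q - (j + 1) + 1 = q - j by omega] at h2
      rw [add_mul, one_mul]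
      omega
  exact (key q le_rfl).trans (Submodule.finrank_le _)

theorem geom_sum_eq_pow {p : ℕ} [Fact p.Prime] {V : Type*} [AddCommGroup V] [Module (ZMod p) V]
    (T : Module.End (ZMod p) V) (e : ℕ) :
    ∑ j ∈ Finset.range (p ^ e), T ^ j = (T - 1) ^ (p ^ e - 1) := by
  open Polynomial in
  have hpoly : ∑ j ∈ Finset.range (p ^ e), (X : (ZMod p)[X]) ^ j = (X - 1) ^ (p ^ e - 1) := by
    have hX : (X - 1 : (ZMod p)[X]) ≠ 0 := by
      simpa using Polynomial.X_sub_C_ne_zero (1 : ZMod p)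
    apply mul_right_cancel₀ hX
    rw [geom_sum_mul, ← pow_succ, Nat.sub_add_cancel (Nat.pos_of_ne_zero
      (pow_ne_zero _ (Fact.out : p.Prime).ne_zero)), sub_pow_char_pow, one_pow]
  simpa using congrArg (Polynomial.aeval T) hpoly

/-- In characteristic `p`, the norm operator `1 + T + ⋯ + T ^ (q - 1)` of an operator with
`T ^ q = 1`, `q = p ^ e`, has rank at most `dim V / q`. -/
theorem mul_finrank_range_norm_le {p : ℕ} [Fact p.Prime] {V : Type*} [AddCommGroup V]
    [Module (ZMod p) V] [FiniteDimensional (ZMod p) V]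
    (T : Module.End (ZMod p) V) (e : ℕ) (hT : T ^ (p ^ e) = 1) :
    p ^ e * Module.finrank (ZMod p) (LinearMap.range (∑ j ∈ Finset.range (p ^ e), T ^ j)) ≤
      Module.finrank (ZMod p) V := by
  rw [geom_sum_eq_pow]
  apply mul_finrank_range_pow_le
  have hpos : 0 < p ^ e := Nat.pos_of_ne_zero (pow_ne_zero _ (Fact.out : p.Prime).ne_zero)
  obtain ⟨m, hm⟩ : ∃ m, p ^ e = m + 1 := ⟨p ^ e - 1, by omega⟩
  calc (T - 1) ^ (p ^ e) = (∑ j ∈ Finset.range (p ^ e), T ^ j) * (T - 1) := by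
        rw [geom_sum_eq_pow, ← pow_succ, Nat.sub_add_cancel hpos]
    _ = 0 := by rw [geom_sum_mul, hT, sub_self]

/-! ### The `p`-rank as the dimension of a space of homomorphisms -/

theorem finite_homs {p : ℕ} [Fact p.Prime] {H : Type*} [Group H] (hH : Group.FG H) :
    FiniteDimensional (ZMod p) (Additive H →+ ZMod p) := by
  obtain ⟨S, hS⟩ := hH.out
  let ev : (Additive H →+ ZMod p) →ₗ[ZMod p] (S → ZMod p) :=
    { toFun := fun χ s => χ (Additive.ofMul s.1)
      map_add' := fun _ _ => rfl
      map_smul' := fun _ _ => rfl }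
  apply FiniteDimensional.of_injective ev
  intro χ ψ h
  have h1 : AddMonoidHom.toMultiplicativeRight χ = AddMonoidHom.toMultiplicativeRight ψ := by
    refine MonoidHom.eq_of_eqOn_dense hS fun s hs => ?_
    exact congrFun h ⟨s, hs⟩
  exact AddMonoidHom.toMultiplicativeRight.injective h1

/-- The set defining `pRank` is bounded, so that its supremum is not a junk value: the coordinates
of a surjection onto `𝔽_p ^ n` are linearly independent. -/
theorem pRank_bound {p : ℕ} [Fact p.Prime] {H : Type*} [Group H] (hH : Group.FG H) {n : ℕ}
    (f : H →* (Fin n → Multiplicative (ZMod p))) (hf : Function.Surjective f) :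
    n ≤ Module.finrank (ZMod p) (Additive H →+ ZMod p) := by
  have := finite_homs (p := p) hH
  let χ : Fin n → (Additive H →+ ZMod p) := fun i =>
    { toFun := fun h => Multiplicative.toAdd (f h.toMul i)
      map_zero' := by simp
      map_add' := by simp }
  have hli : LinearIndependent (ZMod p) χ := by
    rw [Fintype.linearIndependent_iff]
    intro a ha j
    obtain ⟨h, hh⟩ := hf fun i => Multiplicative.ofAdd (if i = j then 1 else 0)
    have := DFunLike.congr_fun ha (Additive.ofMul h)
    simpa [χ, hh] using this
  simpa using hli.fintype_card_le_finrank

/-- The evaluation map of `H` into the dual of `Hom(H, 𝔽_p)`, written in coordinates, is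
surjective. -/
theorem finrank_homs_le_pRank {p : ℕ} [Fact p.Prime] {H : Type*} [Group H] (hH : Group.FG H) :
    Module.finrank (ZMod p) (Additive H →+ ZMod p) ≤ pRank p H := by
  have := finite_homs (p := p) hH
  refine le_csSup ⟨_, fun n ⟨f, hf⟩ => pRank_bound hH f hf⟩ ?_
  set d := Module.finrank (ZMod p) (Additive H →+ ZMod p)
  let b := Module.finBasis (ZMod p) (Additive H →+ ZMod p)
  let g : Additive H →+ (Fin d → ZMod p) := AddMonoidHom.mk' (fun h i => b i h) (by
    intro x y; ext i; simp)
  have hg : Function.Surjective g := by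
    rw [← AddMonoidHom.range_eq_top]
    by_contra hne
    -- The image of `g` is a subspace; a nonzero functional vanishing on it would be a linear
    -- relation between the elements of the basis `b`.
    let W : Submodule (ZMod p) (Fin d → ZMod p) := AddSubgroup.toZModSubmodule p g.range
    have hW : W < ⊤ := by
      refine lt_top_iff_ne_top.2 fun h => hne ?_
      have : ∀ x, x ∈ W := fun x => h ▸ Submodule.mem_top
      exact eq_top_iff.2 fun x _ => this x
    obtain ⟨l, hl0, hl⟩ := Submodule.exists_le_ker_of_lt_top W hW
    apply hl0
    have hrel : ∑ i, l (Pi.single i 1) • b i = 0 := by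
      refine AddMonoidHom.ext fun h => ?_
      have h1 : l (g h) = 0 := hl ⟨h, rfl⟩
      rw [LinearMap.pi_apply_eq_sum_univ] at h1
      simp only [AddMonoidHom.finsetSum_apply, AddMonoidHom.zero_apply]
      rw [← h1]
      refine Finset.sum_congr rfl fun i _ => ?_
      change l _ * b i h = b i h * l _
      rw [mul_comm]
      congr 2
      ext j
      simp [Pi.single_apply, eq_comm]
    have h0 := Fintype.linearIndependent_iff.1 b.linearIndependent _ hrel
    ext i
    simpa using h0 i
  exact ⟨{ toFun := fun h i => Multiplicative.ofAdd (g (Additive.ofMul h) i)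
           map_one' := by ext i; simp
           map_mul' := by intro x y; ext i; simp }, fun v => by
    obtain ⟨h, hh⟩ := hg fun i => (v i).toAdd
    exact ⟨h.toMul, by ext i; simp [hh]⟩⟩

/-! ### Derivations -/

/-- The coinduced representation of `G` on functions `G ⧸ H → 𝔽_p`, given by
`(g • f) c = f (g⁻¹ • c)`. -/
def coind (p : ℕ) {G : Type*} [Group G] (H : Subgroup G) :
    G →* Module.End (ZMod p) (G ⧸ H → ZMod p) where
  toFun g := LinearMap.funLeft (ZMod p) (ZMod p) fun c => g⁻¹ • c
  map_one' := by ext; simp [LinearMap.funLeft]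
  map_mul' x y := by ext; simp [LinearMap.funLeft, mul_smul]

section Der

variable {k V F : Type*} [Field k] [AddCommGroup V] [Module k V] [Group F]

/-- The derivations (crossed homomorphisms, 1-cocycles) of `F` with values in the
representation `ρ`. -/
def Der (ρ : F →* Module.End k V) : Submodule k (F → V) where
  carrier := {D | ∀ x y, D (x * y) = D x + ρ x (D y)}
  zero_mem' := by intro x y; simp
  add_mem' := by
    intro D E hD hE x y
    simp only [Pi.add_apply, hD x y, hE x y, map_add]
    abel
  smul_mem' := by
    intro a D hD x y
    simp only [Pi.smul_apply, hD x y, map_smul, smul_add]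

variable {ρ : F →* Module.End k V}

theorem Der.mul (D : Der ρ) (x y : F) : D.1 (x * y) = D.1 x + ρ x (D.1 y) := D.2 x y

theorem Der.one (D : Der ρ) : D.1 1 = 0 := by
  have := Der.mul D 1 1
  simpa using this

theorem Der.pow (D : Der ρ) (s : F) (q : ℕ) :
    D.1 (s ^ q) = (∑ j ∈ Finset.range q, ρ s ^ j) (D.1 s) := by
  induction q with
  | zero => simpa using Der.one D
  | succ q ih =>
    rw [pow_succ, Der.mul D, ih, Finset.sum_range_succ, LinearMap.add_apply, map_pow]

/-- A derivation vanishing on a set of elements acting trivially vanishes on its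
normal closure. -/
theorem Der.eq_zero_of_mem_normalClosure (D : Der ρ) {R : Set F} (hR : R ⊆ ρ.ker)
    (hD : ∀ r ∈ R, D.1 r = 0) {x : F} (hx : x ∈ Subgroup.normalClosure R) : D.1 x = 0 := by
  let N : Subgroup F :=
    { carrier := {x | ρ x = 1 ∧ D.1 x = 0}
      one_mem' := ⟨map_one ρ, Der.one D⟩
      mul_mem' := by
        rintro x y ⟨hx, hx'⟩ ⟨hy, hy'⟩
        exact ⟨by rw [map_mul, hx, hy, one_mul], by rw [Der.mul D, hx', hy']; simp⟩
      inv_mem' := by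
        rintro x ⟨hx, hx'⟩
        have h : ρ x⁻¹ = 1 := by
          have := map_mul ρ x⁻¹ x
          rwa [inv_mul_cancel, map_one, hx, mul_one, eq_comm] at this
        refine ⟨h, ?_⟩
        have := Der.mul D x x⁻¹
        rw [mul_inv_cancel, Der.one D, hx', hx] at this
        simpa using this.symm }
  have : N.Normal := by
    refine ⟨?_⟩
    rintro x ⟨hx, hx'⟩ g
    have hg : ρ g * ρ g⁻¹ = 1 := by rw [← map_mul, mul_inv_cancel, map_one]
    refine ⟨by rw [map_mul, map_mul, hx, mul_one, hg], ?_⟩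
    have h1 := Der.mul D g g⁻¹
    rw [mul_inv_cancel, Der.one D] at h1
    rw [Der.mul D, Der.mul D, hx', map_mul, hx, mul_one, map_zero, add_zero, ← h1]
  exact (Subgroup.normalClosure_le_normal (N := N)
    (fun r hr => ⟨hR hr, hD r hr⟩) hx).2

/-- On a free group, derivations can be prescribed arbitrarily on the generators. -/
theorem Der.exists_of_free {α : Type*} (ρ : FreeGroup α →* Module.End k V) (v : α → V) :
    ∃ D : Der ρ, ∀ a, D.1 (FreeGroup.of a) = v a := by
  -- The derivation is the orbit of `0` under the affine action with linear part `ρ` and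
  -- translation part `v`.
  have hinv : ∀ x m, ρ x⁻¹ (ρ x m) = m := fun x m => by
    rw [← Module.End.mul_apply, ← map_mul, inv_mul_cancel, map_one]; rfl
  have hinv' : ∀ x m, ρ x (ρ x⁻¹ m) = m := fun x m => by
    simpa only [inv_inv] using hinv x⁻¹ m
  let A : FreeGroup α →* Equiv.Perm V := FreeGroup.lift fun a =>
    { toFun := fun m => ρ (FreeGroup.of a) m + v a
      invFun := fun m => ρ (FreeGroup.of a)⁻¹ (m - v a)
      left_inv := fun m => by beta_reduce; rw [add_sub_cancel_right, hinv]
      right_inv := fun m => by beta_reduce; rw [hinv', sub_add_cancel] }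
  have hof : ∀ a m, A (FreeGroup.of a) m = ρ (FreeGroup.of a) m + v a := fun a m => by
    simp [A]
  have hA : ∀ x m, A x m = A x 0 + ρ x m := by
    intro x
    induction x using FreeGroup.induction_on with
    | C1 => simp
    | of a => intro m; rw [hof, hof]; simp [add_comm]
    | inv_of a h =>
      intro m
      rw [map_inv, Equiv.Perm.inv_eq_iff_eq, hof, map_add, hinv', add_right_comm, ← hof,
        ← Equiv.Perm.mul_apply, mul_inv_cancel]
      simp
    | mul x y hx hy =>
      intro m
      rw [map_mul, Equiv.Perm.mul_apply, Equiv.Perm.mul_apply, hx, hy, hx (A y 0), map_add,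
        map_mul, Module.End.mul_apply, add_assoc]
  refine ⟨⟨fun x => A x 0, fun x y => ?_⟩, fun a => ?_⟩
  · simp only [map_mul, Equiv.Perm.mul_apply]
    rw [hA]
  · simp [hof]

theorem Der.ext_of_free {α : Type*} {ρ : FreeGroup α →* Module.End k V} {D : Der ρ}
    (h : ∀ a, D.1 (FreeGroup.of a) = 0) : D = 0 := by
  ext x
  change D.1 x = 0
  induction x using FreeGroup.induction_on with
  | C1 => exact Der.one D
  | of a => exact h a
  | inv_of a ha =>
    have := Der.mul D (FreeGroup.of a)⁻¹ (FreeGroup.of a)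
    rw [inv_mul_cancel, Der.one D, h, map_zero, add_zero] at this
    exact this.symm
  | mul x y hx hy => rw [Der.mul D, hx, hy, map_zero, add_zero]

/-- Derivations of a free group correspond to their values on the generators. -/
noncomputable def Der.freeEquiv {α : Type*} (ρ : FreeGroup α →* Module.End k V) :
    Der ρ ≃ₗ[k] (α → V) :=
  LinearEquiv.ofBijective
    { toFun := fun D a => D.1 (FreeGroup.of a)
      map_add' := fun _ _ => rfl
      map_smul' := fun _ _ => rfl }
    ⟨(injective_iff_map_eq_zero _).2 fun _ hD => Der.ext_of_free fun a => congrFun hD a,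
      fun v => (Der.exists_of_free ρ v).imp fun _ hD => funext hD⟩

end Der

/-- The derivations vanishing on a set `R`. If `ρ` factors through the group presented by the
relators `R`, these are the derivations of that group. -/
def DerVanishing {k V F : Type*} [Field k] [AddCommGroup V] [Module k V] [Group F]
    (ρ : F →* Module.End k V) (R : Set F) : Submodule k (Der ρ) where
  carrier := {D | ∀ r ∈ R, D.1 r = 0}
  zero_mem' := fun _ _ => rfl
  add_mem' := by
    intro D E hD hE r hr
    change D.1 r + E.1 r = 0
    rw [hD r hr, hE r hr, add_zero]
  smul_mem' := by
    intro a D hD r hr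
    change a • D.1 r = 0
    rw [hD r hr, smul_zero]

/-! ### Upper bound for derivations in the coinduced module -/

/-- The Shapiro lemma, as an upper bound on the dimension of the space of derivations of
`G = ⟨X | R⟩` in the coinduced module: a derivation `D` is determined by the homomorphism
`h ↦ D h H` on `H` together with the values `D g (gH)`, one for each nontrivial coset. -/
theorem finrank_derVanishing_le {p : ℕ} [Fact p.Prime] {G F : Type*} [Group G] [Group F]
    (φ : F →* G) (hφ : Function.Surjective φ) (R : Set F)
    (hker : φ.ker = Subgroup.normalClosure R) (H : Subgroup G) (hH : Group.FG H)
    (hi : H.index ≠ 0) :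
    Module.finrank (ZMod p) (DerVanishing ((coind p H).comp φ) R) ≤
      Module.finrank (ZMod p) (Additive H →+ ZMod p) + (H.index - 1) := by
  have := finite_homs (p := p) hH
  have : H.FiniteIndex := ⟨hi⟩
  have : Fintype (G ⧸ H) := Fintype.ofFinite _
  set ρ := (coind p H).comp φ with hρ
  have hRρ : R ⊆ ρ.ker := fun r hr => by
    have h : φ r = 1 := by
      change r ∈ φ.ker
      rw [hker]
      exact Subgroup.subset_normalClosure hr
    rw [SetLike.mem_coe, MonoidHom.mem_ker, hρ, MonoidHom.comp_apply, h, map_one]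
  let σ : G → F := Function.surjInv hφ
  have hσ : ∀ g, φ (σ g) = g := Function.surjInv_eq hφ
  have hfac : ∀ (D : DerVanishing ρ R) (x y : F), φ x = φ y → D.1.1 x = D.1.1 y := by
    intro D x y hxy
    have hz : D.1.1 (x⁻¹ * y) = 0 := by
      refine Der.eq_zero_of_mem_normalClosure D.1 hRρ D.2 ?_
      rw [← hker, MonoidHom.mem_ker, map_mul, map_inv, hxy, inv_mul_cancel]
    have := Der.mul D.1 x (x⁻¹ * y)
    rw [hz, map_zero, add_zero, mul_inv_cancel_left] at this
    exact this.symm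
  have hcoc : ∀ (D : DerVanishing ρ R) (g g' : G) (c : G ⧸ H),
      D.1.1 (σ (g * g')) c = D.1.1 (σ g) c + D.1.1 (σ g') (g⁻¹ • c) := by
    intro D g g' c
    rw [hfac D (σ (g * g')) (σ g * σ g') (by rw [map_mul, hσ, hσ, hσ]), Der.mul D.1, Pi.add_apply]
    change _ + D.1.1 (σ g') ((φ (σ g))⁻¹ • c) = _
    rw [hσ]
  have hfix : ∀ h ∈ H, h⁻¹ • ((1 : G) : G ⧸ H) = ((1 : G) : G ⧸ H) := by
    intro h hh
    rw [MulAction.Quotient.smul_coe, QuotientGroup.eq]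
    simpa using hh
  let Φ : DerVanishing ρ R →ₗ[ZMod p]
      (Additive H →+ ZMod p) × ({c : G ⧸ H // c ≠ ((1 : G) : G ⧸ H)} → ZMod p) :=
    { toFun := fun D =>
        (AddMonoidHom.mk' (fun h => D.1.1 (σ (h.toMul : H)) ((1 : G) : G ⧸ H)) (by
          intro a b
          rw [toMul_add, Subgroup.coe_mul, hcoc, hfix _ a.toMul.2]),
         fun c => D.1.1 (σ c.1.out) c.1)
      map_add' := fun _ _ => rfl
      map_smul' := fun _ _ => rfl }
  have hinj : Function.Injective Φ := by
    -- If `Φ D = 0` then `D g (gH) = 0` for all `g`, and the cocycle identity for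
    -- `g = x * (x⁻¹ * g)` at the coset `gH` gives `D x (gH) = 0` for all `x`.
    refine (injective_iff_map_eq_zero _).2 fun D hD => ?_
    have h1 : ∀ h ∈ H, D.1.1 (σ h) ((1 : G) : G ⧸ H) = 0 := fun h hh =>
      DFunLike.congr_fun (congrArg Prod.fst hD) (Additive.ofMul (⟨h, hh⟩ : H))
    have h2 : ∀ g : G, D.1.1 (σ g) (g : G ⧸ H) = 0 := by
      intro g
      by_cases hg : (g : G ⧸ H) = ((1 : G) : G ⧸ H)
      · rw [hg]
        refine h1 g ?_
        rw [eq_comm, QuotientGroup.eq] at hg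
        simpa using hg
      · have h3 : D.1.1 (σ (g : G ⧸ H).out) (g : G ⧸ H) = 0 :=
          congrFun (congrArg Prod.snd hD) ⟨(g : G ⧸ H), hg⟩
        have hout : (((g : G ⧸ H).out : G) : G ⧸ H) = (g : G ⧸ H) := QuotientGroup.out_eq' _
        have h4 := hcoc D (g : G ⧸ H).out ((g : G ⧸ H).out⁻¹ * g) (g : G ⧸ H)
        rw [mul_inv_cancel_left, h3, zero_add] at h4
        rw [h4]
        have h5 : (g : G ⧸ H).out⁻¹ • (g : G ⧸ H) = ((1 : G) : G ⧸ H) := by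
          rw [inv_smul_eq_iff, MulAction.Quotient.smul_coe, smul_eq_mul, mul_one, hout]
        rw [h5]
        exact h1 _ (QuotientGroup.eq.1 hout)
    ext x c
    change D.1.1 x c = 0
    induction c using QuotientGroup.induction_on with
    | H g =>
      rw [hfac D x (σ (φ x)) (hσ _).symm]
      have h3 := hcoc D (φ x) ((φ x)⁻¹ * g) (g : G ⧸ H)
      rw [mul_inv_cancel_left, h2, MulAction.Quotient.smul_coe, smul_eq_mul, h2, add_zero] at h3
      exact h3.symm
  have hle := LinearMap.finrank_le_finrank_of_injective hinj
  rw [Module.finrank_prod, Module.finrank_fintype_fun_eq_card, Fintype.card_subtype_compl,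
    Fintype.card_subtype_eq, ← Nat.card_eq_fintype_card] at hle
  exact hle

/-! ### Lower bound for derivations in the coinduced module -/

theorem exists_root (p : ℕ) {α : Type*} (r : FreeGroup α) :
    ∃ s : FreeGroup α, r = s ^ (p ^ nuP p r) := by
  by_cases hb : BddAbove {k : ℕ | ∃ s : FreeGroup α, r = s ^ (p ^ k)}
  · have hne : {k : ℕ | ∃ s : FreeGroup α, r = s ^ (p ^ k)}.Nonempty := ⟨0, r, by simp⟩
    exact Nat.sSup_mem hne hb
  · -- For `r = 1` the exponents are unbounded and `nuP` takes the junk value `0`.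
    refine ⟨r, ?_⟩
    rw [nuP, Nat.sSup_of_not_bddAbove hb, pow_zero, pow_one]

/-- The lower bound on the dimension of the space of derivations: the relator `r = s ^ q` imposes
at most `rank (1 + s + ⋯ + s ^ (q - 1)) ≤ |G : H| / q` conditions, and none if `q > |G : H|`. -/
theorem le_finrank_derVanishing {p : ℕ} [Fact p.Prime] {G : Type*} [Group G] {n : ℕ}
    (φ : FreeGroup (Fin n) →* G) (R : Set (FreeGroup (Fin n))) (hR : R ⊆ φ.ker)
    (hsum : Summable (fun r : R => ((p : ℝ) ^ (nuP p r.1))⁻¹))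
    (H : Subgroup G) (hi : H.index ≠ 0) :
    (n : ℝ) * H.index - H.index * ∑' r : R, ((p : ℝ) ^ (nuP p r.1))⁻¹ ≤
      Module.finrank (ZMod p) (DerVanishing ((coind p H).comp φ) R) := by
  have : H.FiniteIndex := ⟨hi⟩
  have : Fintype (G ⧸ H) := Fintype.ofFinite _
  have hp0 : 0 < p := (Fact.out : p.Prime).pos
  set ρ := (coind p H).comp φ with hρ
  have : FiniteDimensional (ZMod p) (Der ρ) :=
    Module.Finite.equiv (Der.freeEquiv ρ).symm
  have hdimV : Module.finrank (ZMod p) (G ⧸ H → ZMod p) = H.index := by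
    rw [Module.finrank_fintype_fun_eq_card, ← Nat.card_eq_fintype_card]
    rfl
  have hdim : Module.finrank (ZMod p) (Der ρ) = n * H.index := by
    rw [(Der.freeEquiv ρ).finrank_eq, Module.finrank_pi_fintype]
    simp [hdimV]
  choose s hs using fun r : R => exists_root p r.1
  let N : R → Module.End (ZMod p) (G ⧸ H → ZMod p) := fun r =>
    ∑ j ∈ Finset.range (p ^ nuP p r.1), ρ (s r) ^ j
  have hN : ∀ r, p ^ nuP p r.1 * Module.finrank (ZMod p) (LinearMap.range (N r)) ≤ H.index := by
    intro r
    rw [← hdimV]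
    refine mul_finrank_range_norm_le _ _ ?_
    have h1 : φ r.1 = 1 := hR r.2
    rw [← map_pow, ← hs, hρ, MonoidHom.comp_apply, h1, map_one]
  have hDN : ∀ (D : Der ρ) (r : R), D.1 r.1 = N r (D.1 (s r)) := by
    intro D r
    conv_lhs => rw [hs r]
    exact Der.pow D _ _
  have hi' : (0 : ℝ) < H.index := by exact_mod_cast Nat.pos_of_ne_zero hi
  have hfin : {r : R | N r ≠ 0}.Finite := by
    have h1 := hsum.tendsto_cofinite_zero.eventually_lt_const (inv_pos.2 hi')
    refine Set.Finite.subset (Filter.eventually_cofinite.1 h1) fun r hr => ?_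
    have h2 : 0 < Module.finrank (ZMod p) (LinearMap.range (N r)) := by
      rw [Nat.pos_iff_ne_zero]
      intro h
      exact hr (LinearMap.range_eq_bot.1 (Submodule.finrank_eq_zero.1 h))
    have h3 : p ^ nuP p r.1 ≤ H.index :=
      (Nat.le_mul_of_pos_right _ h2).trans (hN r)
    simp only [Set.mem_ofPred_eq, not_lt]
    have h4 : (p : ℝ) ^ nuP p r.1 ≤ H.index := by exact_mod_cast h3
    exact inv_anti₀ (by positivity) h4
  let S : Finset R := hfin.toFinset
  -- Only the finitely many relators in `S` impose any conditions.
  let E : Der ρ →ₗ[ZMod p] ((r : S) → LinearMap.range (N r.1)) :=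
    { toFun := fun D r => ⟨D.1 r.1.1, D.1 (s r.1), (hDN D r.1).symm⟩
      map_add' := fun _ _ => rfl
      map_smul' := fun _ _ => rfl }
  have hE : LinearMap.ker E ≤ DerVanishing ρ R := by
    intro D hD r hr
    by_cases h : N ⟨r, hr⟩ = 0
    · have := hDN D ⟨r, hr⟩
      rw [h] at this
      simpa using this
    · have hmem : (⟨r, hr⟩ : R) ∈ S := by simpa [S] using h
      exact congrArg Subtype.val (congrFun (LinearMap.mem_ker.1 hD) ⟨⟨r, hr⟩, hmem⟩)
  have h1 := Submodule.finrank_mono hE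
  have h2 := LinearMap.finrank_range_add_finrank_ker E
  have h3 : Module.finrank (ZMod p) (LinearMap.range E) ≤
      ∑ r ∈ S, Module.finrank (ZMod p) (LinearMap.range (N r)) := by
    refine (Submodule.finrank_le _).trans ?_
    rw [Module.finrank_pi_fintype, ← Finset.sum_coe_sort S]
  have h4 : (∑ r ∈ S, (Module.finrank (ZMod p) (LinearMap.range (N r)) : ℝ)) ≤
      H.index * ∑' r : R, ((p : ℝ) ^ (nuP p r.1))⁻¹ := by
    calc _ ≤ ∑ r ∈ S, (H.index : ℝ) * ((p : ℝ) ^ (nuP p r.1))⁻¹ := by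
          refine Finset.sum_le_sum fun r _ => ?_
          rw [← div_eq_mul_inv, le_div_iff₀ (by positivity), mul_comm]
          exact_mod_cast hN r
      _ = H.index * ∑ r ∈ S, ((p : ℝ) ^ (nuP p r.1))⁻¹ := by rw [Finset.mul_sum]
      _ ≤ _ := by
          refine mul_le_mul_of_nonneg_left ?_ hi'.le
          exact hsum.sum_le_tsum S fun r _ => by positivity
  have h5 : n * H.index ≤ Module.finrank (ZMod p) (DerVanishing ρ R) +
      ∑ r ∈ S, Module.finrank (ZMod p) (LinearMap.range (N r)) := by
    omega
  have h6 : (n : ℝ) * H.index ≤ Module.finrank (ZMod p) (DerVanishing ρ R) +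
      ∑ r ∈ S, (Module.finrank (ZMod p) (LinearMap.range (N r)) : ℝ) := by
    exact_mod_cast h5
  linarith

/-- `def_p(G) − 1 ≤ RG_p(G)`; in particular if `def_p(G) > 1` then
`RG_p(G) > 0`. -/
theorem statement4 {G : Type*} [Group G] (hfg : Group.FG G) (p : ℕ) (hp : p.Prime) :
    defP p G - 1 ≤ RGp p G ∧ (1 < defP p G → 0 < RGp p G) := by
  have : Fact p.Prime := ⟨hp⟩
  have main : defP p G - 1 ≤ RGp p G := by
    refine le_csInf ⟨_, ⊤, inferInstance, by simp, rfl⟩ ?_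
    rintro _ ⟨H, -, hi, rfl⟩
    have : H.FiniteIndex := ⟨hi⟩
    have hi' : (1 : ℝ) ≤ H.index := by exact_mod_cast Nat.one_le_iff_ne_zero.2 hi
    rw [sub_le_iff_le_add, defP]
    rcases Set.eq_empty_or_nonempty {x : ℝ | ∃ (n : ℕ) (R : Set (FreeGroup (Fin n)))
        (φ : FreeGroup (Fin n) →* G),
        Function.Surjective φ ∧ φ.ker = Subgroup.normalClosure R ∧
        Summable (fun r : R => ((p : ℝ) ^ (nuP p r.1))⁻¹) ∧
        x = (n : ℝ) - ∑' r : R, ((p : ℝ) ^ (nuP p r.1))⁻¹} with hem | hne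
    · -- The supremum of the empty set is the junk value `0`, and the right side is nonnegative.
      rw [hem, Real.sSup_empty, ← sub_le_iff_le_add, le_div_iff₀ (by linarith)]
      have : (0 : ℝ) ≤ pRank p H := Nat.cast_nonneg _
      linarith
    · refine csSup_le hne ?_
      rintro _ ⟨n, R, φ, hφ, hker, hsum, rfl⟩
      have := hfg
      have hH : Group.FG H := inferInstance
      have h1 := le_finrank_derVanishing φ R
        (by rw [hker]; exact Subgroup.subset_normalClosure) hsum H hi
      have h2 := (finrank_derVanishing_le (p := p) φ hφ R hker H hH hi).trans
        (Nat.add_le_add_right (finrank_homs_le_pRank hH) _)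
      have h3 : (Module.finrank (ZMod p) (DerVanishing ((coind p H).comp φ) R) : ℝ) ≤
          pRank p H + (H.index - 1) := by
        have := (Nat.cast_le (α := ℝ)).2 h2
        rwa [Nat.cast_add, Nat.cast_sub (Nat.one_le_iff_ne_zero.2 hi), Nat.cast_one] at this
      rw [← sub_le_iff_le_add, le_div_iff₀ (by linarith)]
      nlinarith
  exact ⟨main, fun h => by linarith⟩

end ResDef
end

section
/- Let G be a finitely presented group. Then rdef(G) − 1 ≤ DG(G). In particular, if rdef(G) > 1, then G has a finite index subgroup whose deficiency is greater than one. -/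
/-! The quantity `(def(H) - 1) / |G : H|` is bounded below one presentation at a time. Let
`⟨x₁, …, xₙ | u_i ^ m_i⟩` present `G` and let `k_i` be the order of `u_i` modulo the finite
residual. Finitely many powers of the `u_i` have to be kept nontrivial, so some finite index normal
subgroup `H` has `u_i` of order at least `k_i` in `G ⧸ H` (`exists_normal_orderOf`).
Lifting the presentation to `H` gives `j n` generators, with `j = |G : H|`. There are `j - 1`
relators from a transversal. Among the `j` lifts of `u_i ^ m_i`, those whose base points lie in the
same coset of `⟨u_i⟩` are conjugate, so at most `j / k_i` of them are needed. Hence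
`def(H) - 1 ≥ j (n - 1 - ∑ 1 / k_i)` (`le_deficiency_of_normal`).

The lift is done by Reidemeister rewriting, encoded as a homomorphism to the wreath product of the
free group on the edges of the Cayley graph of `G ⧸ H` with `G ⧸ H`. An arbitrary transversal is
enough: no Schreier transversal and no freeness of subgroups of free groups is used.

Since `sSup` of an unbounded or empty set of reals is `0`, the argument also needs that deficiencies
are bounded by the number of generators (`presentation_le_card`), that the deficiency gradient is a
finite supremum (`bddAbove_DG`), and that `G` has a presentation whose relators are powers of
elements that are not proper powers (`exists_rootfree_presentation`).
-/

open scoped Classical ENNReal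

namespace ResDef

variable {G : Type*} [Group G]

/-! ### Bounds on the deficiency -/

section Deficiency

variable {H : Type*} [Group H]

/-- The deficiency of any finite presentation is at most the cardinality of any finite generating
set `T`: additive functions `FreeGroup (Fin n) → ℚ` form a space of dimension `n`, and such a
function is zero once it vanishes on the relators and on lifts of the elements of `T`. -/
lemma presentation_le_card {T : Finset H} (hT : Subgroup.closure (T : Set H) = ⊤)
    {n : ℕ} {R : Finset (FreeGroup (Fin n))} {φ : FreeGroup (Fin n) →* H}
    (hφ : Function.Surjective φ)
    (hker : φ.ker = Subgroup.normalClosure (R : Set (FreeGroup (Fin n)))) :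
    (n : ℝ) - (R.card : ℝ) ≤ T.card := by
  choose w hw using hφ
  let L : (Fin n → ℚ) → FreeGroup (Fin n) →* Multiplicative ℚ :=
    fun f => FreeGroup.lift fun i => Multiplicative.ofAdd (f i)
  have hadd : ∀ f g x, L (f + g) x = L f x * L g x := by
    intro f g x
    have : L (f + g) = L f * L g := by
      ext i; simp [L]
    rw [this]; rfl
  have hsmul : ∀ (c : ℚ) f x,
      Multiplicative.toAdd (L (c • f) x) = c * Multiplicative.toAdd (L f x) := by
    intro c f x
    induction x using FreeGroup.induction_on with
    | C1 => simp
    | of i => simp [L]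
    | inv_of i h => simp only [map_inv, toAdd_inv, h, mul_neg]
    | mul a b ha hb => simp only [map_mul, toAdd_mul, ha, hb, mul_add]
  let Λ : (Fin n → ℚ) →ₗ[ℚ] ((R ⊕ T) → ℚ) :=
    { toFun := fun f => Sum.elim (fun r => Multiplicative.toAdd (L f r.1))
        (fun t => Multiplicative.toAdd (L f (w t.1)))
      map_add' := by
        intro f g
        ext (r | t) <;> simp [hadd]
      map_smul' := by
        intro c f
        ext (r | t) <;> simp [hsmul] }
  have hinj : Function.Injective Λ := by
    rw [injective_iff_map_eq_zero]
    intro f hf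
    have hR : ∀ r ∈ R, L f r = 1 := fun r hr => by
      have := congrFun hf (Sum.inl ⟨r, hr⟩)
      simpa [Λ] using this
    have hTw : ∀ t ∈ T, L f (w t) = 1 := fun t ht => by
      have := congrFun hf (Sum.inr ⟨t, ht⟩)
      simpa [Λ] using this
    have h1 : φ.ker ≤ (L f).ker := by
      rw [hker]
      exact Subgroup.normalClosure_le_normal fun r hr => hR r hr
    have h2 : (⊤ : Subgroup H) ≤ (L f).ker.map φ := by
      rw [← hT, Subgroup.closure_le]
      exact fun t ht => ⟨w t, hTw t ht, hw t⟩
    ext i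
    obtain ⟨v, hv, hvi⟩ := h2 (Subgroup.mem_top (φ (FreeGroup.of i)))
    have h3 : v⁻¹ * FreeGroup.of i ∈ (L f).ker := h1 (by simp [MonoidHom.mem_ker, hvi])
    have h4 : FreeGroup.of i ∈ (L f).ker := by
      simpa using mul_mem hv h3
    have h5 : L f (FreeGroup.of i) = 1 := h4
    simpa [L] using h5
  have := LinearMap.finrank_le_finrank_of_injective hinj
  simp at this
  rw [sub_le_iff_le_add]
  exact_mod_cast (by omega : n ≤ T.card + R.card)

lemma deficiency_le_card {T : Finset H} (hT : Subgroup.closure (T : Set H) = ⊤) :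
    deficiency H ≤ T.card := by
  refine Real.sSup_le ?_ (by positivity)
  rintro x ⟨n, R, φ, hφ, hker, rfl⟩
  exact presentation_le_card hT hφ hker

/-- A finite presentation on any finite index type bounds the deficiency from below. -/
lemma le_deficiency {α : Type*} [Fintype α] (R : Finset (FreeGroup α)) (φ : FreeGroup α →* H)
    (hφ : Function.Surjective φ) (hker : φ.ker = Subgroup.normalClosure (R : Set (FreeGroup α))) :
    (Fintype.card α : ℝ) - R.card ≤ deficiency H := by
  let e := FreeGroup.freeGroupCongr (Fintype.equivFin α)
  let φ' : FreeGroup (Fin (Fintype.card α)) →* H := φ.comp e.symm.toMonoidHom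
  have hφ' : Function.Surjective φ' := hφ.comp e.symm.surjective
  let R' := R.map e.toEquiv.toEmbedding
  have hker' : φ'.ker = Subgroup.normalClosure (R' : Set (FreeGroup (Fin (Fintype.card α)))) := by
    have h1 : (R' : Set (FreeGroup (Fin (Fintype.card α)))) = e.toMonoidHom '' R := by
      ext; simp [R']
    have h2 := Subgroup.map_normalClosure (R : Set (FreeGroup α)) e.toMonoidHom e.surjective
    rw [h1, ← h2, ← hker]
    ext x
    rw [Subgroup.mem_map_equiv]
    rfl
  refine le_csSup ⟨(Finset.univ.image fun i => φ' (FreeGroup.of i)).card, ?_⟩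
    ⟨_, R', φ', hφ', hker', by simp [R']⟩
  rintro x ⟨n, S, ψ, hψ, hk, rfl⟩
  refine presentation_le_card ?_ hψ hk
  rw [eq_top_iff, ← MonoidHom.range_eq_top.2 hφ', MonoidHom.range_eq_map,
    ← FreeGroup.closure_range_of, MonoidHom.map_closure]
  refine Subgroup.closure_mono ?_
  rintro _ ⟨_, ⟨i, rfl⟩, rfl⟩
  simp

end Deficiency

/-! ### Reidemeister rewriting -/

section Rewriting

variable {α Q : Type*} [Group Q] (π : FreeGroup α →* Q)

/-- The homomorphism to the wreath product that records, next to the image of a word in `Q`, the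
edges traversed by the word in the Cayley graph of `Q`, from every starting vertex. The edge leaving
`d` with label `x` is the generator `(d, x)`; it sits in coordinate `d⁻¹` since `Q` acts on
coordinates from the left but on vertices from the right. -/
def wreathHom : FreeGroup α →* RegularWreathProduct (FreeGroup (Q × α)) Q :=
  FreeGroup.lift fun x => ⟨fun q => FreeGroup.of (q⁻¹, x), π (FreeGroup.of x)⟩

/-- The word in the edges of the Cayley graph traversed by `w` starting at the vertex `d`. -/
def tau (d : Q) (w : FreeGroup α) : FreeGroup (Q × α) := (wreathHom π w).left d⁻¹

lemma wreathHom_right (w : FreeGroup α) : (wreathHom π w).right = π w := by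
  have : RegularWreathProduct.rightHom.comp (wreathHom π) = π := by
    ext x; simp [wreathHom]
  exact DFunLike.congr_fun this w

lemma tau_mul (d : Q) (v w : FreeGroup α) :
    tau π d (v * w) = tau π d v * tau π (d * π v) w := by
  simp [tau, wreathHom_right]

@[simp] lemma tau_one (d : Q) : tau π d 1 = 1 := by simp [tau]

@[simp] lemma tau_of (d : Q) (x : α) : tau π d (FreeGroup.of x) = FreeGroup.of (d, x) := by
  simp [tau, wreathHom]

lemma tau_inv (d : Q) (w : FreeGroup α) : tau π d w⁻¹ = (tau π (d * (π w)⁻¹) w)⁻¹ := by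
  rw [← mul_eq_one_iff_eq_inv]
  simpa using (tau_mul π d w⁻¹ w).symm

variable (t : Q → FreeGroup α)

/-- Closes up each edge `d → d * π x` to a loop at the identity vertex, using the transversal `t`. -/
def psi : FreeGroup (Q × α) →* FreeGroup α :=
  FreeGroup.lift fun p => t p.1 * FreeGroup.of p.2 * (t (p.1 * π (FreeGroup.of p.2)))⁻¹

lemma psi_tau (d : Q) (w : FreeGroup α) :
    psi π t (tau π d w) = t d * w * (t (d * π w))⁻¹ := by
  induction w using FreeGroup.induction_on generalizing d with
  | C1 => simp
  | of x => simp [psi]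
  | inv_of x h => rw [tau_inv, map_inv, h]; simp [mul_assoc]
  | mul v w hv hw => simp [tau_mul, hv, hw, mul_assoc]

lemma pi_psi (ht : ∀ d, π (t d) = d) (e : FreeGroup (Q × α)) : π (psi π t e) = 1 := by
  induction e using FreeGroup.induction_on with
  | C1 => simp
  | of p => simp [psi, ht]
  | inv_of p h => simp [h]
  | mul v w hv hw => simp [hv, hw]

/-- Modulo the words `tau 1 (t d)`, rewriting is a left inverse of `psi`. -/
lemma tau_psi (ht : ∀ d, π (t d) = d) (N : Subgroup (FreeGroup (Q × α))) [N.Normal]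
    (hN : ∀ d, tau π 1 (t d) ∈ N) (e : FreeGroup (Q × α)) :
    (tau π 1 (psi π t e) : FreeGroup (Q × α) ⧸ N) = (e : FreeGroup (Q × α) ⧸ N) := by
  induction e using FreeGroup.induction_on with
  | C1 => simp
  | of p =>
    have h := fun d => (QuotientGroup.eq_one_iff (N := N) _).2 (hN d)
    simp [psi, tau_mul, tau_inv, ht, h]
  | inv_of p h =>
    rw [map_inv, tau_inv, pi_psi π t ht]
    simpa using h
  | mul v w hv hw => simp [tau_mul, pi_psi π t ht, hv, hw]

end Rewriting

/-- The subgroup of words that lie in the kernel of `π` and all of whose rewritings lie in `N`. -/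
def rewriteKer {α Q : Type*} [Group Q] (π : FreeGroup α →* Q)
    (N : Subgroup (FreeGroup (Q × α))) : Subgroup (FreeGroup α) where
  carrier := {w | π w = 1 ∧ ∀ d, tau π d w ∈ N}
  one_mem' := by simp [one_mem]
  mul_mem' := by
    rintro v w ⟨hv, hv'⟩ ⟨hw, hw'⟩
    exact ⟨by simp [hv, hw], fun d => by rw [tau_mul]; exact mul_mem (hv' _) (hw' _)⟩
  inv_mem' := by
    rintro v ⟨hv, hv'⟩
    exact ⟨by simp [hv], fun d => by rw [tau_inv]; exact inv_mem (hv' _)⟩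

instance {α Q : Type*} [Group Q] (π : FreeGroup α →* Q)
    (N : Subgroup (FreeGroup (Q × α))) [hN : N.Normal] : (rewriteKer π N).Normal where
  conj_mem := by
    rintro w ⟨hw, hw'⟩ v
    refine ⟨by simp [hw], fun d => ?_⟩
    have := hN.conj_mem _ (hw' (d * π v)) (tau π d v)
    simpa [tau_mul, tau_inv, hw] using this

/-! ### Presentations of finite index subgroups -/

/-- The presentation of a finite index normal subgroup obtained by rewriting; the subgroup is given
as the kernel of `p`. There are a generator for each pair in `Q × α`, one relator for each
nontrivial element of `Q`, and one rewriting of `u i ^ m i` for each left coset of the subgroup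
generated by the image of `u i`. Other rewritings of `u i ^ m i` are conjugate to these because
`u i` commutes with its powers. -/
lemma le_deficiency_of_normal {α G : Type*} [Fintype α] [Group G] {s : ℕ}
    (u : Fin s → FreeGroup α) (m : Fin s → ℕ) (φ : FreeGroup α →* G)
    (hφ : Function.Surjective φ)
    (hker : φ.ker = Subgroup.normalClosure (Set.range fun i => u i ^ m i))
    {Q : Type*} [Group Q] [Fintype Q] (p : G →* Q) (hp : Function.Surjective p) :
    (Fintype.card Q : ℝ) * (Fintype.card α - 1 - ∑ i, ((orderOf (p (φ (u i))) : ℝ))⁻¹) + 1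
      ≤ deficiency p.ker := by
  obtain ⟨π, hπφ⟩ : ∃ π : FreeGroup α →* Q, ∀ w, π w = p (φ w) := ⟨p.comp φ, fun _ => rfl⟩
  have hπ : Function.Surjective π := fun q => by
    obtain ⟨g, rfl⟩ := hp q
    obtain ⟨w, rfl⟩ := hφ g
    exact ⟨w, hπφ w⟩
  have hπH : ∀ w, π w = 1 ↔ φ w ∈ p.ker := fun w => by rw [hπφ, MonoidHom.mem_ker]
  have ⟨t, ht, ht1⟩ : ∃ t : Q → FreeGroup α, (∀ d, π (t d) = d) ∧ t 1 = 1 := by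
    choose t ht using hπ
    refine ⟨Function.update t 1 1, fun d => ?_, by simp⟩
    by_cases hd : d = 1
    · simp [hd]
    · simp [hd, ht]
  let rel : (i : Fin s) × (Q ⧸ Subgroup.zpowers (π (u i))) → FreeGroup (Q × α) :=
    fun p => tau π p.2.out (u p.1 ^ m p.1)
  let R : Finset (FreeGroup (Q × α)) :=
    (Finset.univ.erase (1 : Q)).image (fun d => tau π 1 (t d)) ∪ Finset.univ.image rel
  let N := Subgroup.normalClosure (R : Set (FreeGroup (Q × α)))
  have hRN : ∀ r ∈ R, r ∈ N := fun r hr => Subgroup.subset_normalClosure hr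
  have hNt : ∀ d, tau π 1 (t d) ∈ N := by
    intro d
    by_cases hd : d = 1
    · simp [hd, ht1, one_mem]
    · exact hRN _ (Finset.mem_union_left _ (Finset.mem_image_of_mem _ (by simp [hd])))
  have hφu : ∀ i, φ (u i ^ m i) = 1 := fun i => by
    have : u i ^ m i ∈ φ.ker := hker ▸ Subgroup.subset_normalClosure ⟨i, rfl⟩
    exact this
  have hπu : ∀ i, π (u i ^ m i) = 1 := fun i => (hπH _).2 (hφu i ▸ one_mem _)
  have hNr : ∀ i d, tau π d (u i ^ m i) ∈ N := by
    intro i d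
    let q : Q ⧸ Subgroup.zpowers (π (u i)) := d
    have hq : tau π q.out (u i ^ m i) ∈ N := by
      have h0 : rel ⟨i, q⟩ ∈ R :=
        Finset.mem_union_right _ (Finset.mem_image_of_mem rel (Finset.mem_univ _))
      exact hRN _ h0
    have hmem : q.out⁻¹ * d ∈ Subgroup.zpowers (π (u i)) :=
      QuotientGroup.eq.1 (QuotientGroup.out_eq' q)
    obtain ⟨a, ha⟩ := hmem
    have hd : d = q.out * π (u i ^ a) := by
      have ha' : π (u i) ^ a = q.out⁻¹ * d := ha
      rw [map_zpow, ha', mul_inv_cancel_left]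
    -- Rewriting both sides of `u ^ a * u ^ m = u ^ m * u ^ a` exhibits the conjugacy.
    have h1 : tau π q.out (u i ^ a * u i ^ m i) = tau π q.out (u i ^ m i * u i ^ a) := by
      congr 1
      exact ((Commute.refl (u i)).zpow_left a).pow_right (m i)
    rw [tau_mul, tau_mul, hπu, mul_one, ← hd] at h1
    have h2 : tau π d (u i ^ m i) = (tau π q.out (u i ^ a))⁻¹ * tau π q.out (u i ^ m i) *
        ((tau π q.out (u i ^ a))⁻¹)⁻¹ := by
      rw [inv_inv, mul_assoc, ← h1]; group
    rw [h2]
    exact Subgroup.normalClosure_normal.conj_mem _ hq _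
  have hle : φ.ker ≤ rewriteKer π N := by
    rw [hker]
    refine Subgroup.normalClosure_le_normal ?_
    rintro _ ⟨i, rfl⟩
    exact ⟨hπu i, hNr i⟩
  let Ψ : FreeGroup (Q × α) →* p.ker :=
    (φ.comp (psi π t)).codRestrict p.ker fun e => (hπH _).1 (pi_psi π t ht e)
  have hΨ1 : ∀ e, e ∈ Ψ.ker ↔ φ (psi π t e) = 1 := fun e => by
    rw [MonoidHom.mem_ker, ← Subtype.coe_inj]
    rfl
  have hΨ : Function.Surjective Ψ := by
    rintro ⟨h, hh⟩
    obtain ⟨w, rfl⟩ := hφ h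
    refine ⟨tau π 1 w, Subtype.ext ?_⟩
    change φ (psi π t (tau π 1 w)) = φ w
    simp [psi_tau, (hπH w).2 hh, ht1]
  have hΨker : Ψ.ker = N := by
    apply le_antisymm
    · intro e he
      have h1 := (hle ((hΨ1 e).1 he)).2 1
      rw [← QuotientGroup.eq_one_iff, tau_psi π t ht N hNt, QuotientGroup.eq_one_iff] at h1
      exact h1
    · refine Subgroup.normalClosure_le_normal fun r hr => ?_
      change r ∈ Ψ.ker
      rw [hΨ1]
      rcases Finset.mem_union.1 hr with hr | hr
      · obtain ⟨d, -, rfl⟩ := Finset.mem_image.1 hr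
        simp [psi_tau, ht, ht1]
      · obtain ⟨⟨i, q⟩, -, rfl⟩ := Finset.mem_image.1 hr
        simp only [rel, psi_tau, hπu, mul_one, map_mul, hφu, map_inv, mul_inv_cancel]
  refine le_trans ?_ (le_deficiency R Ψ hΨ hΨker)
  have hpos : 1 ≤ Fintype.card Q := Fintype.card_pos
  have hcoset : ∀ i, (Fintype.card (Q ⧸ Subgroup.zpowers (π (u i))) : ℝ)
      = Fintype.card Q * ((orderOf (p (φ (u i))) : ℝ))⁻¹ := by
    intro i
    have h1 := Subgroup.card_eq_card_quotient_mul_card_subgroup (Subgroup.zpowers (π (u i)))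
    rw [Nat.card_zpowers, Nat.card_eq_fintype_card, Nat.card_eq_fintype_card] at h1
    have h2 : (orderOf (p (φ (u i))) : ℝ) ≠ 0 := by
      exact_mod_cast (orderOf_pos (p (φ (u i)))).ne'
    rw [eq_mul_inv_iff_mul_eq₀ h2, ← hπφ]
    exact_mod_cast h1.symm
  have hR : (R.card : ℝ) ≤ (Fintype.card Q - 1)
      + ∑ i, (Fintype.card (Q ⧸ Subgroup.zpowers (π (u i))) : ℝ) := by
    have h1 : R.card ≤ (Fintype.card Q - 1)
        + ∑ i, Fintype.card (Q ⧸ Subgroup.zpowers (π (u i))) := by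
      refine (Finset.card_union_le _ _).trans (add_le_add ?_ ?_)
      · refine Finset.card_image_le.trans ?_
        simp
      · refine Finset.card_image_le.trans ?_
        simp
    have h2 : (R.card : ℝ) ≤ ((Fintype.card Q - 1 : ℕ) : ℝ)
        + ∑ i, (Fintype.card (Q ⧸ Subgroup.zpowers (π (u i))) : ℝ) := by exact_mod_cast h1
    rwa [Nat.cast_sub hpos, Nat.cast_one] at h2
  simp only [hcoset, ← Finset.mul_sum] at hR
  rw [Fintype.card_prod, Nat.cast_mul]
  linarith

/-! ### Residual deficiency -/

lemma finiteResidual_le {G : Type*} [Group G] (H : Subgroup G) (hH : H.index ≠ 0) :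
    finiteResidual G ≤ H := iInf₂_le H hH

/-- Finitely many elements attain at least their orders modulo the finite residual in one finite
quotient. -/
lemma exists_normal_orderOf {G : Type*} [Group G] {s : ℕ} (g : Fin s → G) :
    ∃ (H : Subgroup G) (_ : H.Normal), H.FiniteIndex ∧
      ∀ i, orderIn (finiteResidual G) (g i) ≤ orderOf (g i : G ⧸ H) := by
  have key : ∀ i (j : Fin (orderIn (finiteResidual G) (g i))), ∃ K : Subgroup G, K.FiniteIndex ∧
      (0 < (j : ℕ) → g i ^ (j : ℕ) ∉ K) := by
    intro i j
    by_cases hj : 0 < (j : ℕ)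
    · have h1 : g i ^ (j : ℕ) ∉ finiteResidual G := fun h =>
        Nat.notMem_of_lt_sInf (show (j : ℕ) < sInf _ from j.2) ⟨hj, h⟩
      simp only [finiteResidual, Subgroup.mem_iInf, not_forall] at h1
      obtain ⟨K, hK, hK'⟩ := h1
      exact ⟨K, ⟨hK⟩, fun _ => hK'⟩
    · exact ⟨⊤, inferInstance, fun h => absurd h hj⟩
  choose K hKfin hK using key
  have hfin : (⨅ i, ⨅ j, K i j).FiniteIndex :=
    Subgroup.finiteIndex_iInf fun i => Subgroup.finiteIndex_iInf fun j => hKfin i j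
  refine ⟨(⨅ i, ⨅ j, K i j).normalCore, inferInstance, inferInstance, fun i => ?_⟩
  by_contra! hlt
  have : Finite (G ⧸ (⨅ i, ⨅ j, K i j).normalCore) :=
    Subgroup.finite_quotient_of_finiteIndex
  refine hK i ⟨_, hlt⟩ (orderOf_pos _) ?_
  have h1 := pow_orderOf_eq_one (g i : G ⧸ (⨅ i, ⨅ j, K i j).normalCore)
  rw [← QuotientGroup.mk_pow, QuotientGroup.eq_one_iff] at h1
  have h2 := Subgroup.normalCore_le _ h1
  simp only [Subgroup.mem_iInf] at h2
  exact h2 i ⟨_, hlt⟩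

/-- The inequality for a single presentation: some finite index subgroup realises its residual
deficiency. -/
lemma exists_subgroup_of_presentation {G : Type*} [Group G] {n s : ℕ}
    (u : Fin s → FreeGroup (Fin n)) (m : Fin s → ℕ) (φ : FreeGroup (Fin n) →* G)
    (hm : ∀ i, 1 ≤ m i) (hφ : Function.Surjective φ)
    (hker : φ.ker = Subgroup.normalClosure (Set.range fun i => u i ^ m i)) :
    ∃ H : Subgroup G, H.index ≠ 0 ∧
      (n : ℝ) - ∑ i, ((orderIn (finiteResidual G) (φ (u i)) : ℝ))⁻¹ - 1
        ≤ (deficiency H - 1) / (H.index : ℝ) := by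
  obtain ⟨H, hN, hfin, hH⟩ := exists_normal_orderOf fun i => φ (u i)
  refine ⟨H, hfin.index_ne_zero, ?_⟩
  have : Finite (G ⧸ H) := Subgroup.finite_quotient_of_finiteIndex
  have : Fintype (G ⧸ H) := Fintype.ofFinite _
  have h1 := le_deficiency_of_normal u m φ hφ hker (QuotientGroup.mk' H)
    (QuotientGroup.mk'_surjective H)
  rw [Fintype.card_fin, QuotientGroup.ker_mk', ← Nat.card_eq_fintype_card,
    ← Subgroup.index_eq_card] at h1
  simp only [QuotientGroup.mk'_apply] at h1
  have hidx : (0 : ℝ) < H.index := by exact_mod_cast Nat.pos_of_ne_zero hfin.index_ne_zero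
  have hsum : ∑ i, ((orderOf (φ (u i) : G ⧸ H) : ℝ))⁻¹
      ≤ ∑ i, ((orderIn (finiteResidual G) (φ (u i)) : ℝ))⁻¹ := by
    refine Finset.sum_le_sum fun i _ => ?_
    -- Without torsion `orderIn` would be the junk value `0`; here `φ (u i) ^ m i = 1` excludes it.
    have hpos : 0 < orderIn (finiteResidual G) (φ (u i)) := by
      refine (Nat.sInf_mem (s := {j : ℕ | 0 < j ∧ φ (u i) ^ j ∈ finiteResidual G})
        ⟨m i, hm i, ?_⟩).1
      have : u i ^ m i ∈ φ.ker := hker ▸ Subgroup.subset_normalClosure ⟨i, rfl⟩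
      rw [MonoidHom.mem_ker, map_pow] at this
      rw [this]
      exact one_mem _
    have hi := hH i
    gcongr
  rw [le_div_iff₀ hidx]
  nlinarith

/-- The presentations allowed in the definition of `rdef` exist: adding a generator `t` and the
relator `t`, and replacing each relator `r` by `r * t`, makes every relator have exponent sum one
in `t`, so that none of them is a proper power. -/
lemma exists_rootfree_presentation {G : Type*} [Group G] (hG : FinitelyPresentedGroup G) :
    ∃ (n s : ℕ) (u : Fin s → FreeGroup (Fin n)) (m : Fin s → ℕ) (φ : FreeGroup (Fin n) →* G),
      (∀ i, 1 ≤ m i) ∧ (∀ i, NotProperPower (u i)) ∧ Function.Surjective φ ∧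
      φ.ker = Subgroup.normalClosure (Set.range fun i => u i ^ m i) := by
  obtain ⟨n, R, φ, hφ, hker⟩ := hG
  let t : FreeGroup (Fin (n + 1)) := FreeGroup.of (Fin.last n)
  let ι : FreeGroup (Fin n) →* FreeGroup (Fin (n + 1)) := FreeGroup.map Fin.castSucc
  -- the retraction killing `t`
  let ρ : FreeGroup (Fin (n + 1)) →* FreeGroup (Fin n) :=
    FreeGroup.lift (Fin.lastCases 1 FreeGroup.of)
  have hρι : ∀ w, ρ (ι w) = w := by
    intro w
    have : ρ.comp ι = MonoidHom.id _ := by ext x; simp [ρ, ι]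
    exact DFunLike.congr_fun this w
  have hρt : ρ t = 1 := by simp [ρ, t]
  let ε : FreeGroup (Fin (n + 1)) →* Multiplicative ℤ :=
    FreeGroup.lift (Fin.lastCases (Multiplicative.ofAdd 1) fun _ => 1)
  have hει : ∀ w, ε (ι w) = 1 := by
    intro w
    have : ε.comp ι = 1 := by ext x; simp [ε, ι]
    exact DFunLike.congr_fun this w
  have hεt : ε t = Multiplicative.ofAdd 1 := by simp [ε, t]
  let u : Fin (R.card + 1) → FreeGroup (Fin (n + 1)) :=
    Fin.lastCases t fun i => ι (R.equivFin.symm i).1 * t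
  have hul : u (Fin.last _) = t := by simp [u]
  have huc : ∀ i : Fin R.card, u i.castSucc = ι (R.equivFin.symm i).1 * t := by simp [u]
  have hεu : ∀ i, ε (u i) = Multiplicative.ofAdd 1 := by
    intro i
    induction i using Fin.lastCases with
    | last => rw [hul, hεt]
    | cast i => rw [huc, map_mul, hει, hεt, one_mul]
  refine ⟨n + 1, R.card + 1, u, fun _ => 1, φ.comp ρ, fun _ => le_rfl, ?_, ?_, ?_⟩
  · intro i v k hk
    have h1 := congrArg (fun x => Multiplicative.toAdd (ε x)) hk
    simp only [hεu, map_pow, toAdd_pow, toAdd_ofAdd, nsmul_eq_mul] at h1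
    have h2 : (k : ℤ) ∣ 1 := ⟨_, h1⟩
    have h3 := Int.natCast_dvd_natCast.1 (by exact_mod_cast h2 : (k : ℤ) ∣ ((1 : ℕ) : ℤ))
    exact Nat.dvd_one.1 h3
  · exact hφ.comp fun w => ⟨ι w, hρι w⟩
  · simp only [pow_one]
    set M := Subgroup.normalClosure (Set.range u) with hM
    have huM : ∀ i, u i ∈ M := fun i => Subgroup.subset_normalClosure ⟨i, rfl⟩
    have htM : t ∈ M := hul ▸ huM (Fin.last _)
    have hιM : φ.ker ≤ M.comap ι := by
      rw [hker]
      have : (M.comap ι).Normal := Subgroup.Normal.comap Subgroup.normalClosure_normal ι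
      refine Subgroup.normalClosure_le_normal fun r hr => ?_
      have h1 := huM (R.equivFin ⟨r, hr⟩).castSucc
      rw [huc, Equiv.symm_apply_apply] at h1
      exact (Subgroup.mul_mem_cancel_right M htM).1 h1
    apply le_antisymm
    · intro w hw
      -- modulo `t`, the retraction is the identity
      have hq : (QuotientGroup.mk' M).comp (ι.comp ρ) = QuotientGroup.mk' M := by
        ext x
        induction x using Fin.lastCases with
        | last =>
          have h0 : ((t : FreeGroup (Fin (n + 1))) : FreeGroup (Fin (n + 1)) ⧸ M) = 1 :=
            (QuotientGroup.eq_one_iff _).2 htM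
          change ((ι (ρ t) : FreeGroup (Fin (n + 1))) : FreeGroup (Fin (n + 1)) ⧸ M) = (t : _ ⧸ M)
          rw [hρt, h0, map_one, QuotientGroup.mk_one]
        | cast x => simp [ρ, ι]
      have h1 : ι (ρ w) ∈ M := hιM hw
      have h2 : ((ι (ρ w) : FreeGroup (Fin (n + 1))) : FreeGroup (Fin (n + 1)) ⧸ M) = w :=
        DFunLike.congr_fun hq w
      rwa [← QuotientGroup.eq_one_iff, h2, QuotientGroup.eq_one_iff] at h1
    · refine Subgroup.normalClosure_le_normal ?_
      rintro _ ⟨i, rfl⟩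
      change φ (ρ (u i)) = 1
      induction i using Fin.lastCases with
      | last => rw [hul, hρt, map_one]
      | cast i =>
        rw [huc, map_mul, hρι, hρt, mul_one]
        have : (R.equivFin.symm i).1 ∈ φ.ker :=
          hker ▸ Subgroup.subset_normalClosure (R.equivFin.symm i).2
        exact this

/-- The supremum defining the deficiency gradient is finite, by Schreier's bound on the number of
generators of a finite index subgroup. -/
lemma bddAbove_DG {G : Type*} [Group G] (hG : FinitelyPresentedGroup G) :
    BddAbove {x : ℝ | ∃ H : Subgroup G, H.index ≠ 0 ∧
      x = (deficiency H - 1) / (H.index : ℝ)} := by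
  obtain ⟨n, R, φ, hφ, -⟩ := hG
  obtain ⟨S, hS⟩ : ∃ S : Finset G, Subgroup.closure (S : Set G) = ⊤ := by
    refine ⟨Finset.univ.image fun i => φ (FreeGroup.of i), ?_⟩
    rw [eq_top_iff, ← MonoidHom.range_eq_top.2 hφ, MonoidHom.range_eq_map,
      ← FreeGroup.closure_range_of, MonoidHom.map_closure]
    refine Subgroup.closure_mono ?_
    rintro _ ⟨_, ⟨i, rfl⟩, rfl⟩
    simp
  refine ⟨S.card, ?_⟩
  rintro x ⟨H, hH, rfl⟩
  have : H.FiniteIndex := ⟨hH⟩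
  obtain ⟨T, hTS, hT⟩ := Subgroup.exists_finset_card_le_mul H hS
  have h1 := deficiency_le_card hT
  have h2 : (T.card : ℝ) ≤ H.index * S.card := by exact_mod_cast hTS
  have hidx : (0 : ℝ) < H.index := by exact_mod_cast Nat.pos_of_ne_zero hH
  rw [div_le_iff₀ hidx]
  linarith

/-- `rdef(G) − 1 ≤ DG(G)`; in particular if `rdef(G) > 1` then `G` has a
finite index subgroup with deficiency greater than one. -/
theorem statement7 {G : Type*} [Group G] (hG : FinitelyPresentedGroup G) :
    rdef G - 1 ≤ DG G ∧
    (1 < rdef G → ∃ H : Subgroup G, H.index ≠ 0 ∧ 1 < deficiency H) := by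
  obtain ⟨n, s, u, m, φ, hm, hu, hφ, hker⟩ := exists_rootfree_presentation hG
  constructor
  · rw [sub_le_iff_le_add]
    refine csSup_le ⟨_, n, s, u, m, φ, hm, hu, hφ, hker, rfl⟩ ?_
    rintro x ⟨n, s, u, m, φ, hm, -, hφ, hker, rfl⟩
    obtain ⟨H, hH, hle⟩ := exists_subgroup_of_presentation u m φ hm hφ hker
    rw [← sub_le_iff_le_add]
    exact hle.trans (le_csSup (bddAbove_DG hG) ⟨H, hH, rfl⟩)
  · intro h
    obtain ⟨x, ⟨n, s, u, m, φ, hm, -, hφ, hker, rfl⟩, hx⟩ :=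
      exists_lt_of_lt_csSup (by exact ⟨_, n, s, u, m, φ, hm, hu, hφ, hker, rfl⟩) h
    obtain ⟨H, hH, hle⟩ := exists_subgroup_of_presentation u m φ hm hφ hker
    refine ⟨H, hH, ?_⟩
    have hidx : (0 : ℝ) < H.index := by exact_mod_cast Nat.pos_of_ne_zero hH
    have h1 : 0 < (deficiency H - 1) / (H.index : ℝ) := by linarith
    have h2 := (div_pos_iff_of_pos_right hidx).1 h1
    linarith

end ResDef
end
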